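/- Let t ≥ 15 be an integer and 0 < p ≤ p_0(t). Then there exist constants ε₀' = ε₀'(p,t) > 0 and C = C(p,t) > 0 such that: for every 0 < ε < ε₀', every n, and every shifted 3-wise t-intersecting family 𝒢 ⊆ 2^[n] with μ_p(𝒢) = p^t − ε, either μ_p(F_0^t △ 𝒢) < C·ε, or p = p_0(t) and μ_p(F_1^t △ 𝒢) < C·ε, where △ denotes symmetric difference of families. -/

import Mathlib

/-!
The theorem follows, with `C = 2`, from a gap: for given `t` and `p` there is `δ > 0` such that a
shifted 3-wise `t`-intersecting family of measure greater than `p ^ t - δ` is contained in `F_0^t`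
or, when `p = p₀(t)`, in `F_1^t` (`exists_gap`). Both of these have measure at most `p ^ t`, so the
symmetric difference with a subfamily of measure `p ^ t - ε` has measure at most `ε`.

For the gap, replace the family by its up-closure on a ground set with at least `t + 9` elements.
Reading a set as a walk with an up-step for each element and a right-step for each hole, every
member reaches the line `y = 2x + t` (`hits`), an event of probability at most `a ^ t` whenever
`p + (1 - p) a³ ≤ a` (`mu_hit_le`); here `a = p exp (1.18 x)` with `x = p² (1 - p)` is used.

Suppose that `𝒢` lies in none of `F_0^t, …, F_3^t`. For `s ≤ 3` and each `s`-subset `H` of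
`[t+s-1]`, take the cylinder of all sets whose holes in `[t+3s]` are exactly `H`. These cylinders
are disjoint and their members reach the line. As `𝒢 ⊄ F_s^t`, the set `[n] ∖ [t+2s, t+3s]` is in
`𝒢`, and together with shiftedness this makes the link of `𝒢` on each cylinder an up-closed
intersecting family, which has measure at most `p` for `p ≤ 1/2` (`mu_intersecting_le`). So a
fraction `1 - p` of each cylinder lies outside `𝒢` (`cyl_sdiff_ge`), and subtracting these losses
from `a ^ t` leaves less than `p ^ t`, by the numerical inequality `main_num`.

If `𝒢` lies in `F_2^t` or `F_3^t`, or in `F_1^t` with `p < p₀(t)`, the measure of that family is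
itself below `p ^ t`; the condition `p ≤ p₀(t)` says precisely that `(t + 2) p² ≤ 1 + p`.
-/

open Finset

/-- The `p`-measure of a family of subsets of `[n] = {1,…,n}`. -/
noncomputable def mu (p : ℝ) (n : ℕ) (𝒢 : Finset (Finset ℕ)) : ℝ :=
  ∑ G ∈ 𝒢, p ^ G.card * (1 - p) ^ (n - G.card)

/-- `𝒢` is a family of subsets of `[n] = {1,…,n}`. -/
def FamilyOn (n : ℕ) (𝒢 : Finset (Finset ℕ)) : Prop :=
  ∀ G ∈ 𝒢, G ⊆ Finset.Icc 1 n

/-- `𝒢` is 3-wise `t`-intersecting. -/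
def Intersecting3 (t : ℕ) (𝒢 : Finset (Finset ℕ)) : Prop :=
  ∀ G₁ ∈ 𝒢, ∀ G₂ ∈ 𝒢, ∀ G₃ ∈ 𝒢, t ≤ (G₁ ∩ G₂ ∩ G₃).card

/-- `𝒢` is shifted (stable under all shifting operations `σ_{i,j}`). -/
def Shifted (n : ℕ) (𝒢 : Finset (Finset ℕ)) : Prop :=
  ∀ i j : ℕ, 1 ≤ i → i < j → j ≤ n → ∀ G ∈ 𝒢, j ∈ G → i ∉ G →
    insert i (G.erase j) ∈ 𝒢

/-- `𝒢` is inclusion maximal as a family of subsets of `[n]`. -/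
def InclMaximal (n : ℕ) (𝒢 : Finset (Finset ℕ)) : Prop :=
  ∀ G ∈ 𝒢, ∀ H : Finset ℕ, G ⊆ H → H ⊆ Finset.Icc 1 n → H ∈ 𝒢

/-- The family `F_s^t = {F ⊆ [n] : |F ∩ [t+3s]| ≥ t+2s}`. -/
def Fst (n t s : ℕ) : Finset (Finset ℕ) :=
  (Finset.Icc 1 n).powerset.filter
    (fun F => t + 2 * s ≤ (F ∩ Finset.Icc 1 (t + 3 * s)).card)

/-- The threshold `p₀(t) = 2/(√(4t+9) − 1)`. -/
noncomputable def p0 (t : ℕ) : ℝ := 2 / (Real.sqrt (4 * t + 9) - 1)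

/-- `α(p) = (√((1+3p)/(1−p)) − 1)/2`. -/
noncomputable def alpha (p : ℝ) : ℝ := (Real.sqrt ((1 + 3 * p) / (1 - p)) - 1) / 2

/-- Two families of subsets of `[n]` are isomorphic: one is the image of the
other under a permutation of `[n]`. -/
def Isom (n : ℕ) (𝒢 𝒢' : Finset (Finset ℕ)) : Prop :=
  ∃ π : Equiv.Perm ℕ, (∀ x ∈ Finset.Icc 1 n, π x ∈ Finset.Icc 1 n) ∧
    𝒢' = 𝒢.image (fun G => G.image π)

/-- The walk of `G ⊆ [n]` hits the line `y = 2x + c`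
(at some step `j ≤ n`, where hitting at step `j` means `3|G∩[j]| = 2j + c`). -/
def HitsLine (n c : ℕ) (G : Finset ℕ) : Prop :=
  ∃ j : ℕ, j ≤ n ∧ 3 * (G ∩ Finset.Icc 1 j).card = 2 * j + c

/-! ### Biased measures -/

/-- Expectation of `f` over the `p`-biased random subset of `V`. -/
noncomputable def ev (p : ℝ) (V : Finset ℕ) (f : Finset ℕ → ℝ) : ℝ :=
  ∑ A ∈ V.powerset, p ^ A.card * (1 - p) ^ (V.card - A.card) * f A

lemma ev_insert (p : ℝ) {V : Finset ℕ} {a : ℕ} (ha : a ∉ V) (f : Finset ℕ → ℝ) :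
    ev p (insert a V) f = (1 - p) * ev p V f + p * ev p V (fun A => f (insert a A)) := by
  unfold ev
  rw [Finset.sum_powerset_insert ha, Finset.mul_sum, Finset.mul_sum]
  congr 1
  · refine Finset.sum_congr rfl fun A hA => ?_
    have h := Finset.card_le_card (Finset.mem_powerset.1 hA)
    rw [Finset.card_insert_of_notMem ha, Nat.sub_add_comm h, pow_succ]
    ring
  · refine Finset.sum_congr rfl fun A hA => ?_
    have haA : a ∉ A := fun h => ha (Finset.mem_powerset.1 hA h)
    rw [Finset.card_insert_of_notMem ha, Finset.card_insert_of_notMem haA,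
      Nat.add_sub_add_right, pow_succ]
    ring

lemma ev_mono {p : ℝ} (hp : 0 ≤ p) (hp1 : p ≤ 1) (V : Finset ℕ) {f g : Finset ℕ → ℝ}
    (h : ∀ A ⊆ V, f A ≤ g A) : ev p V f ≤ ev p V g := by
  refine Finset.sum_le_sum fun A hA => ?_
  have : 0 ≤ 1 - p := by linarith
  exact mul_le_mul_of_nonneg_left (h A (Finset.mem_powerset.1 hA)) (by positivity)

lemma ev_nonneg {p : ℝ} (hp : 0 ≤ p) (hp1 : p ≤ 1) (V : Finset ℕ) {f : Finset ℕ → ℝ}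
    (h : ∀ A ⊆ V, 0 ≤ f A) : 0 ≤ ev p V f := by
  refine Finset.sum_nonneg fun A hA => ?_
  have : 0 ≤ 1 - p := by linarith
  exact mul_nonneg (by positivity) (h A (Finset.mem_powerset.1 hA))

lemma ev_one (p : ℝ) (V : Finset ℕ) : ev p V (fun _ => 1) = 1 := by
  induction V using Finset.induction_on with
  | empty => simp [ev]
  | insert a V ha ih => rw [ev_insert p ha, ih]; ring

lemma mu_eq_ev (p : ℝ) (n : ℕ) (V : Finset ℕ) (hV : V.card = n) (𝒜 : Finset (Finset ℕ))
    (h : ∀ A ∈ 𝒜, A ⊆ V) : mu p n 𝒜 = ev p V (fun A => if A ∈ 𝒜 then 1 else 0) := by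
  unfold mu ev
  subst hV
  simp only [mul_ite, mul_one, mul_zero]
  rw [← Finset.sum_filter]
  refine Finset.sum_congr ?_ fun _ _ => rfl
  ext A
  simp only [Finset.mem_filter, Finset.mem_powerset]
  exact ⟨fun hA => ⟨h A hA, hA⟩, fun hA => hA.2⟩

lemma mu_powerset (p : ℝ) (n : ℕ) (V : Finset ℕ) (hV : V.card = n) :
    mu p n V.powerset = 1 := by
  rw [mu_eq_ev p n V hV _ (fun A hA => Finset.mem_powerset.1 hA)]
  refine Eq.trans ?_ (ev_one p V)
  refine Finset.sum_congr rfl fun A hA => ?_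
  simp [Finset.mem_powerset.1 hA]

lemma mu_mono {p : ℝ} (hp : 0 ≤ p) (hp1 : p ≤ 1) (n : ℕ) {𝒜 ℬ : Finset (Finset ℕ)}
    (h : 𝒜 ⊆ ℬ) : mu p n 𝒜 ≤ mu p n ℬ := by
  refine Finset.sum_le_sum_of_subset_of_nonneg h fun A _ _ => ?_
  have : 0 ≤ 1 - p := by linarith
  positivity

/-- The two-point inequality behind `ev_le_rpow`; it is convexity of `x ↦ x ^ θ`. -/
lemma two_point {θ : ℝ} (hθ : 1 ≤ θ) {a b : ℝ} (ha : 0 ≤ a) (hab : a ≤ b) :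
    (1 - (1 / 2 : ℝ) ^ θ) * a ^ θ + (1 / 2 : ℝ) ^ θ * b ^ θ ≤ ((a + b) / 2) ^ θ := by
  have hb : 0 ≤ b := ha.trans hab
  -- `(2a)^θ + b^θ ≤ a^θ + (a+b)^θ`
  have key : (2 * a) ^ θ + b ^ θ ≤ a ^ θ + (a + b) ^ θ := by
    rcases eq_or_lt_of_le hb with hb0 | hb0
    · have : a = 0 := by linarith
      subst this; rw [← hb0]; simp
    have hc := convexOn_rpow hθ
    have h0 : (0 : ℝ) < b := hb0
    have h1 := hc.2 (Set.mem_Ici.2 ha) (Set.mem_Ici.2 (by linarith : 0 ≤ a + b))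
      (div_nonneg (by linarith : 0 ≤ b - a) hb) (div_nonneg ha hb)
      (by field_simp; ring)
    have h2 := hc.2 (Set.mem_Ici.2 ha) (Set.mem_Ici.2 (by linarith : 0 ≤ a + b))
      (div_nonneg ha hb) (div_nonneg (by linarith : 0 ≤ b - a) hb)
      (by field_simp; ring)
    have e1 : (b - a) / b * a + a / b * (a + b) = 2 * a := by field_simp; ring
    have e2 : a / b * a + (b - a) / b * (a + b) = b := by field_simp; ring
    simp only [smul_eq_mul] at h1 h2
    rw [e1] at h1
    rw [e2] at h2
    have e3 : (b - a) / b = 1 - a / b := by field_simp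
    rw [e3] at h1 h2
    nlinarith
  have h2 : (0 : ℝ) < (1 / 2) ^ θ := by positivity
  have e1 : (1 / 2 : ℝ) ^ θ * (2 * a) ^ θ = a ^ θ := by
    rw [← Real.mul_rpow (by norm_num) (by positivity)]; congr 1; ring
  have e2 : (1 / 2 : ℝ) ^ θ * (a + b) ^ θ = ((a + b) / 2) ^ θ := by
    rw [← Real.mul_rpow (by norm_num) (by positivity)]; congr 1; ring
  have := mul_le_mul_of_nonneg_left key h2.le
  rw [mul_add, mul_add, e1, e2] at this
  linarith

/-- For a monotone `0/1`-valued `f`, the measure with bias `2 ^ (-θ)` is at most the `θ`-th power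
of the unbiased one. -/
lemma ev_le_rpow {θ : ℝ} (hθ : 1 ≤ θ) (V : Finset ℕ) :
    ∀ f : Finset ℕ → ℝ, (∀ A, f A = 0 ∨ f A = 1) →
      (∀ A B, A ⊆ B → B ⊆ V → f A ≤ f B) →
      ev ((1 / 2 : ℝ) ^ θ) V f ≤ (ev (1 / 2) V f) ^ θ := by
  have hp0 : (0 : ℝ) ≤ (1 / 2) ^ θ := by positivity
  have hp1 : (1 / 2 : ℝ) ^ θ ≤ 1 :=
    Real.rpow_le_one (by norm_num) (by norm_num) (by linarith)
  induction V using Finset.induction_on with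
  | empty =>
    intro f hf _
    rcases hf ∅ with h | h
    · simp [ev, h, Real.zero_rpow (by linarith : θ ≠ 0)]
    · simp [ev, h]
  | insert a V ha ih =>
    intro f hf hm
    rw [ev_insert _ ha, ev_insert _ ha]
    have i0 := ih f hf (fun A B hAB hB => hm A B hAB (hB.trans (Finset.subset_insert a V)))
    have i1 := ih (fun A => f (insert a A)) (fun A => hf _) (fun A B hAB hB =>
      hm _ _ (Finset.insert_subset_insert a hAB) (Finset.insert_subset_insert a hB))
    have hnn : 0 ≤ ev (1 / 2) V f := ev_nonneg (by norm_num) (by norm_num) V fun A _ => by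
      rcases hf A with h | h <;> simp [h]
    have hle : ev (1 / 2) V f ≤ ev (1 / 2) V (fun A => f (insert a A)) :=
      ev_mono (by norm_num) (by norm_num) V fun A hA =>
        hm _ _ (Finset.subset_insert a A) (Finset.insert_subset_insert a hA)
    have htp := two_point hθ hnn hle
    have h1 := mul_le_mul_of_nonneg_left i0 (sub_nonneg.2 hp1)
    have h2 := mul_le_mul_of_nonneg_left i1 hp0
    refine (add_le_add h1 h2).trans (htp.trans (le_of_eq ?_))
    congr 1; ring

/-- An up-closed intersecting family has `p`-measure at most `p`, for `p ≤ 1/2`. -/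
lemma mu_intersecting_le {p : ℝ} (hp : 0 < p) (hp2 : p ≤ 1 / 2) (n : ℕ) (V : Finset ℕ)
    (hV : V.card = n) (𝒜 : Finset (Finset ℕ)) (hA : ∀ A ∈ 𝒜, A ⊆ V)
    (hup : ∀ A ∈ 𝒜, ∀ B, A ⊆ B → B ⊆ V → B ∈ 𝒜)
    (hinter : ∀ A ∈ 𝒜, ∀ B ∈ 𝒜, (A ∩ B).Nonempty) : mu p n 𝒜 ≤ p := by
  classical
  set f : Finset ℕ → ℝ := fun A => if A ∈ 𝒜 then 1 else 0 with hf
  set θ : ℝ := Real.logb (1 / 2) p with hθdef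
  have hpow : (1 / 2 : ℝ) ^ θ = p := Real.rpow_logb (by norm_num) (by norm_num) hp
  have hθ : 1 ≤ θ := by
    by_contra hlt
    push Not at hlt
    have := Real.rpow_lt_rpow_of_exponent_gt (by norm_num : (0 : ℝ) < 1 / 2) (by norm_num) hlt
    rw [hpow, Real.rpow_one] at this
    linarith
  have h01 : ∀ A, f A = 0 ∨ f A = 1 := fun A => by
    by_cases h : A ∈ 𝒜 <;> simp [hf, h]
  have hmain := ev_le_rpow hθ V f h01 (fun A B hAB hB => by
    by_cases h : A ∈ 𝒜
    · simp [hf, h, hup A h B hAB hB]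
    · simp only [hf, h, if_false]; split_ifs <;> norm_num)
  have hhalf : ev (1 / 2) V f ≤ 1 / 2 := by
    -- complementation preserves the unbiased measure, and never maps `𝒜` into itself
    have hc : ev (1 / 2) V f = ev (1 / 2) V (fun A => f (V \ A)) := by
      unfold ev
      refine Finset.sum_nbij' (fun A => V \ A) (fun A => V \ A) ?_ ?_ ?_ ?_ ?_
      · intro A _; simp
      · intro A _; simp
      · intro A h; simpa using Finset.mem_powerset.1 h
      · intro A h; simpa using Finset.mem_powerset.1 h
      · intro A h
        have h' := Finset.mem_powerset.1 h
        have hc := Finset.card_le_card h'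
        beta_reduce
        rw [Finset.sdiff_sdiff_eq_self h', Finset.card_sdiff_of_subset h']
        norm_num
        left
        rw [← pow_add, ← pow_add]; congr 1; omega
    have hs : ev (1 / 2) V f + ev (1 / 2) V (fun A => f (V \ A)) ≤ 1 := by
      refine le_trans ?_ (ev_one (1 / 2) V).le
      unfold ev
      rw [← Finset.sum_add_distrib]
      refine Finset.sum_le_sum fun A _ => ?_
      beta_reduce
      rw [← mul_add]
      refine mul_le_mul_of_nonneg_left ?_ (by positivity)
      by_cases h : A ∈ 𝒜
      · have : V \ A ∉ 𝒜 := fun h' => by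
          have := hinter A h _ h'
          rw [Finset.inter_sdiff_self] at this
          exact Finset.not_nonempty_empty this
        simp [hf, h, this]
      · simp only [hf, h, if_false]; split_ifs <;> norm_num
    linarith
  have hnn : 0 ≤ ev (1 / 2) V f := ev_nonneg (by norm_num) (by norm_num) V fun A _ => by
    rcases h01 A with h | h <;> simp [h]
  rw [mu_eq_ev p n V hV 𝒜 hA]
  rw [hpow] at hmain
  refine hmain.trans ((Real.rpow_le_rpow hnn hhalf (by linarith)).trans hpow.le)

/-! ### Random walks -/

/-- The supermartingale bound for the walk reaching the line `y = 2x + t`: any `a > 0` with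
`p + (1 - p) a ^ 3 ≤ a` gives the bound `a ^ t` for the hitting probability. -/
lemma mu_hit_le {p a : ℝ} (hp : 0 ≤ p) (hp1 : p ≤ 1) (ha : 0 < a)
    (hsup : p + (1 - p) * a ^ 3 ≤ a) (t n : ℕ) :
    mu p n ((Icc 1 n).powerset.filter
      (fun G => ∃ j ≤ n, 2 * j + t ≤ 3 * (G ∩ Icc 1 j).card)) ≤ a ^ t := by
  classical
  -- the potential: `1` after a hit, and `a ^ (distance to the line)` before
  have key : ∀ n : ℕ, ev p (Icc 1 n) (fun G =>
      if ∃ j ≤ n, 2 * j + t ≤ 3 * (G ∩ Icc 1 j).card then 1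
      else a ^ (t + 2 * n - 3 * (G ∩ Icc 1 n).card)) ≤ a ^ t := by
    intro n
    induction n with
    | zero =>
      simp only [ev]
      by_cases h : t = 0 <;> simp [h]
    | succ n ih =>
      have hI : Icc 1 (n + 1) = insert (n + 1) (Icc 1 n) := by
        ext x; simp only [mem_Icc, mem_insert]; omega
      have hn : n + 1 ∉ Icc 1 n := by simp
      rw [hI, ev_insert p hn]
      refine le_trans ?_ ih
      unfold ev
      rw [Finset.mul_sum, Finset.mul_sum, ← Finset.sum_add_distrib]
      refine Finset.sum_le_sum fun G hG => ?_
      have hG' := Finset.mem_powerset.1 hG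
      have hq : 0 ≤ 1 - p := by linarith
      have hw : 0 ≤ p ^ G.card * (1 - p) ^ ((Icc 1 n).card - G.card) := by positivity
      -- before step `n + 1` both continuations agree with `G`
      have hagree : ∀ j ≤ n, insert (n + 1) G ∩ Icc 1 j = G ∩ Icc 1 j := by
        intro j hj
        rw [Finset.insert_inter_of_notMem]
        simp; omega
      have hGn : G ∩ Icc 1 n = G := Finset.inter_eq_left.2 hG'
      have hnG : n + 1 ∉ G := fun h => hn (hG' h)
      have hG1 : G ∩ insert (n + 1) (Icc 1 n) = G := by
        rw [Finset.inter_eq_left]; exact hG'.trans (Finset.subset_insert _ _)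
      have hG2 : (insert (n + 1) G ∩ insert (n + 1) (Icc 1 n)).card = G.card + 1 := by
        rw [← Finset.insert_inter_distrib, hGn, Finset.card_insert_of_notMem hnG]
      have main : (1 - p) * (if ∃ j ≤ n + 1, 2 * j + t ≤ 3 * (G ∩ Icc 1 j).card then 1
            else a ^ (t + 2 * (n + 1) - 3 * (G ∩ insert (n + 1) (Icc 1 n)).card))
          + p * (if ∃ j ≤ n + 1, 2 * j + t ≤ 3 * (insert (n + 1) G ∩ Icc 1 j).card then 1
            else a ^ (t + 2 * (n + 1) - 3 * (insert (n + 1) G ∩ insert (n + 1) (Icc 1 n)).card))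
          ≤ (if ∃ j ≤ n, 2 * j + t ≤ 3 * (G ∩ Icc 1 j).card then 1
            else a ^ (t + 2 * n - 3 * (G ∩ Icc 1 n).card)) := by
        by_cases h : ∃ j ≤ n, 2 * j + t ≤ 3 * (G ∩ Icc 1 j).card
        · obtain ⟨j, hj, hjj⟩ := h
          rw [if_pos ⟨j, by omega, hjj⟩, if_pos ⟨j, by omega, by rwa [hagree j hj]⟩,
            if_pos ⟨j, hj, hjj⟩]
          linarith
        · rw [if_neg h, hG1, hG2, hGn]
          have hd : 3 * G.card < 2 * n + t := by
            by_contra hc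
            exact h ⟨n, le_rfl, by rw [hGn]; omega⟩
          have h1 : ¬ ∃ j ≤ n + 1, 2 * j + t ≤ 3 * (G ∩ Icc 1 j).card := by
            rintro ⟨j, hj, hjj⟩
            rcases Nat.lt_or_ge n j with hlt | hge
            · have : j = n + 1 := by omega
              subst this
              rw [hI, hG1] at hjj; omega
            · exact h ⟨j, hge, hjj⟩
          rw [if_neg h1]
          obtain ⟨d, hd'⟩ : ∃ d, 2 * n + t = 3 * G.card + (d + 1) :=
            ⟨2 * n + t - 3 * G.card - 1, by omega⟩
          have e1 : t + 2 * (n + 1) - 3 * G.card = d + 3 := by omega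
          have e2 : t + 2 * (n + 1) - 3 * (G.card + 1) = d := by omega
          have e3 : t + 2 * n - 3 * G.card = d + 1 := by omega
          rw [e1, e2, e3]
          have hif : (if ∃ j ≤ n + 1, 2 * j + t ≤ 3 * (insert (n + 1) G ∩ Icc 1 j).card
              then (1 : ℝ) else a ^ d) = a ^ d := by
            split_ifs with h2
            · obtain ⟨j, hj, hjj⟩ := h2
              rcases Nat.lt_or_ge n j with hlt | hge
              · have : j = n + 1 := by omega
                subst this
                rw [hI, hG2] at hjj
                have : d = 0 := by omega
                simp [this]
              · exact absurd ⟨j, hge, by rwa [hagree j hge] at hjj⟩ h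
            · rfl
          rw [hif]
          have := mul_le_mul_of_nonneg_left hsup (pow_pos ha d).le
          calc _ = a ^ d * (p + (1 - p) * a ^ 3) := by ring
            _ ≤ _ := this
            _ = _ := by ring
      have := mul_le_mul_of_nonneg_left main hw
      refine le_trans (le_of_eq ?_) this
      ring
  refine le_trans (le_of_eq_of_le (mu_eq_ev p n (Icc 1 n) (by simp) _ ?_) ?_) (key n)
  · intro A hA
    exact Finset.mem_powerset.1 (Finset.mem_filter.1 hA).1
  · refine ev_mono hp hp1 _ fun G hG => ?_
    by_cases h : ∃ j ≤ n, 2 * j + t ≤ 3 * (G ∩ Icc 1 j).card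
    · simp only [Finset.mem_filter, Finset.mem_powerset, hG, h, and_self, if_true, le_refl]
    · simp only [Finset.mem_filter, h, and_false, if_false]
      positivity

/-! ### Shifted up-closed families -/

/-- In a shifted up-closed family, membership passes to every set whose walk stays weakly above. -/
lemma mem_of_dominates {n : ℕ} {𝒢 : Finset (Finset ℕ)} (hF : FamilyOn n 𝒢) (hS : Shifted n 𝒢)
    (hU : InclMaximal n 𝒢) {G' : Finset ℕ} (hG' : G' ⊆ Icc 1 n) :
    ∀ k : ℕ, ∀ G ∈ 𝒢, (G \ G').card = k →
      (∀ j ≤ n, (G ∩ Icc 1 j).card ≤ (G' ∩ Icc 1 j).card) → G' ∈ 𝒢 := by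
  intro k
  induction k with
  | zero =>
    intro G hG hk _
    have : G ⊆ G' := by
      rw [← Finset.sdiff_eq_empty_iff_subset]; exact Finset.card_eq_zero.1 hk
    exact hU G hG G' this hG'
  | succ k ih =>
    intro G hG hk hdom
    have hne : (G \ G').Nonempty := by rw [← Finset.card_pos]; omega
    -- swap the first surplus element `j` of `G` for an earlier surplus element `i` of `G'`
    set j := (G \ G').min' hne with hj
    have hjm : j ∈ G \ G' := Finset.min'_mem _ _
    have hjG := (Finset.mem_sdiff.1 hjm).1
    have hjG' := (Finset.mem_sdiff.1 hjm).2
    have hmin : ∀ m ∈ G, m < j → m ∈ G' := by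
      intro m hm hlt
      by_contra hc
      exact absurd (Finset.min'_le (G \ G') m (Finset.mem_sdiff.2 ⟨hm, hc⟩)) (by omega)
    have hjn := Finset.mem_Icc.1 (hF G hG hjG)
    obtain ⟨i, hi, hiG⟩ : ∃ i ∈ G' ∩ Icc 1 j, i ∉ G := by
      by_contra hc
      push Not at hc
      have hss : G' ∩ Icc 1 j ⊂ G ∩ Icc 1 j := by
        rw [Finset.ssubset_iff_of_subset
          (fun x hx => Finset.mem_inter.2 ⟨hc x hx, (Finset.mem_inter.1 hx).2⟩)]
        exact ⟨j, Finset.mem_inter.2 ⟨hjG, Finset.mem_Icc.2 ⟨hjn.1, le_rfl⟩⟩,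
          fun h => hjG' (Finset.mem_inter.1 h).1⟩
      exact absurd (hdom j hjn.2) (not_le.2 (Finset.card_lt_card hss))
    obtain ⟨hiG', hiI⟩ := Finset.mem_inter.1 hi
    rw [Finset.mem_Icc] at hiI
    have hij : i < j := lt_of_le_of_ne hiI.2 (fun h => hjG' (h ▸ hiG'))
    have hG1 := hS i j hiI.1 hij hjn.2 G hG hjG hiG
    refine ih _ hG1 ?_ ?_
    · have : insert i (G.erase j) \ G' = (G \ G').erase j := by
        ext x; simp only [mem_sdiff, mem_insert, mem_erase]
        constructor
        · rintro ⟨rfl | h, h'⟩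
          · exact absurd hiG' h'
          · exact ⟨h.1, h.2, h'⟩
        · rintro ⟨h1, h2, h3⟩; exact ⟨Or.inr ⟨h1, h2⟩, h3⟩
      rw [this, Finset.card_erase_of_mem hjm, hk]; omega
    · intro m hm
      rcases Nat.lt_or_ge m j with hmj | hmj
      · refine Finset.card_le_card fun x hx => ?_
        obtain ⟨hx1, hx2⟩ := Finset.mem_inter.1 hx
        refine Finset.mem_inter.2 ⟨?_, hx2⟩
        rcases Finset.mem_insert.1 hx1 with rfl | h
        · exact hiG'
        · exact hmin x (Finset.mem_of_mem_erase h) (lt_of_le_of_lt (Finset.mem_Icc.1 hx2).2 hmj)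
      · refine le_trans (le_of_eq ?_) (hdom m hm)
        have hjm' : j ∈ G ∩ Icc 1 m := Finset.mem_inter.2 ⟨hjG, Finset.mem_Icc.2 ⟨hjn.1, hmj⟩⟩
        have : insert i (G.erase j) ∩ Icc 1 m = insert i ((G ∩ Icc 1 m).erase j) := by
          ext x; simp only [mem_inter, mem_insert, mem_erase, mem_Icc]
          constructor
          · rintro ⟨rfl | h, h'⟩
            · exact Or.inl rfl
            · exact Or.inr ⟨h.1, h.2, h'⟩
          · rintro (rfl | h)
            · exact ⟨Or.inl rfl, hiI.1, by omega⟩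
            · exact ⟨Or.inr ⟨h.1, h.2.1⟩, h.2.2⟩
        rw [this, Finset.card_insert_of_notMem, Finset.card_erase_of_mem hjm']
        · have := Finset.card_pos.2 ⟨j, hjm'⟩; omega
        · simp [hiG]

/-- Every member of a shifted up-closed 3-wise `t`-intersecting family reaches the line
`y = 2x + t`; step `j` lies on or above that line when `3 |G ∩ [j]| ≥ 2j + t`. -/
lemma hits {n t : ℕ} (ht : 1 ≤ t) {𝒢 : Finset (Finset ℕ)} (hF : FamilyOn n 𝒢) (hS : Shifted n 𝒢)
    (hU : InclMaximal n 𝒢) (hI : Intersecting3 t 𝒢) (G : Finset ℕ) (hG : G ∈ 𝒢) :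
    ∃ j ≤ n, 2 * j + t ≤ 3 * (G ∩ Icc 1 j).card := by
  by_contra hc
  push Not at hc
  -- `K i` misses the `i`-th residue class mod 3 of `[t, n]`; its walk stays just below the line,
  -- hence weakly above that of `G`, while `K 0 ∩ K 1 ∩ K 2 = [t - 1]`
  set K : ℕ → Finset ℕ := fun i => (Icc 1 n).filter (fun x => x < t ∨ (x - t) % 3 ≠ i) with hK
  have hcount : ∀ i < 3, ∀ j, j ≤ n → (K i ∩ Icc 1 j).card + (j + 3 - (t + i)) / 3 = j := by
    intro i hi j
    induction j with
    | zero => intro _; simp; omega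
    | succ j ih =>
      intro hjn
      have ih := ih (by omega)
      have hIcc : Icc 1 (j + 1) = insert (j + 1) (Icc 1 j) := by
        ext x; simp only [mem_Icc, mem_insert]; omega
      by_cases hmem : j + 1 ∈ K i
      · have hc' : j + 1 < t ∨ (j + 1 - t) % 3 ≠ i := (Finset.mem_filter.1 hmem).2
        rw [hIcc, Finset.inter_insert_of_mem hmem, Finset.card_insert_of_notMem (by simp)]
        omega
      · have hc' : ¬ (j + 1 < t ∨ (j + 1 - t) % 3 ≠ i) := fun h =>
          hmem (Finset.mem_filter.2 ⟨Finset.mem_Icc.2 ⟨by omega, hjn⟩, h⟩)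
        rw [hIcc, Finset.inter_insert_of_notMem hmem]
        omega
  have hKmem : ∀ i < 3, K i ∈ 𝒢 := by
    intro i hi
    refine mem_of_dominates hF hS hU (Finset.filter_subset _ _) _ G hG rfl fun j hj => ?_
    have h1 := hcount i hi j hj
    have h2 := hc j hj
    have h3 : (G ∩ Icc 1 j).card ≤ j := by
      simpa using Finset.card_le_card (Finset.inter_subset_right (s₁ := G) (s₂ := Icc 1 j))
    omega
  have h := hI _ (hKmem 0 (by omega)) _ (hKmem 1 (by omega)) _ (hKmem 2 (by omega))
  have hsub : K 0 ∩ K 1 ∩ K 2 ⊆ Icc 1 (t - 1) := by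
    intro x hx
    simp only [hK, mem_inter, mem_filter, mem_Icc] at hx
    rw [Finset.mem_Icc]
    omega
  have := Finset.card_le_card hsub
  rw [Nat.card_Icc] at this
  omega

/-! ### Cylinders and up-closures -/

lemma mu_cylinder (p : ℝ) {n m : ℕ} (hmn : m ≤ n) {A : Finset ℕ} (hA : A ⊆ Icc 1 m)
    (ℬ : Finset (Finset ℕ)) (hB : ∀ B ∈ ℬ, B ⊆ Icc (m + 1) n) :
    mu p n (ℬ.image (fun B => A ∪ B)) =
      p ^ A.card * (1 - p) ^ (m - A.card) * mu p (n - m) ℬ := by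
  have hdisj : ∀ B ∈ ℬ, Disjoint A B := by
    intro B hBm
    rw [Finset.disjoint_left]
    intro x hx hx'
    have h1 := Finset.mem_Icc.1 (hA hx)
    have h2 := Finset.mem_Icc.1 (hB B hBm hx')
    omega
  unfold mu
  rw [Finset.sum_image, Finset.mul_sum]
  · refine Finset.sum_congr rfl fun B hBm => ?_
    have h1 := Finset.card_le_card hA
    have h2 := Finset.card_le_card (hB B hBm)
    rw [Nat.card_Icc] at h1 h2
    rw [Finset.card_union_of_disjoint (hdisj B hBm),
      show n - (A.card + B.card) = (m - A.card) + (n - m - B.card) by omega, pow_add, pow_add]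
    ring
  · intro B hB1 B' hB2 h
    have hAB : A ∪ B = A ∪ B' := h
    have e1 : (A ∪ B) \ A = B := Finset.union_sdiff_cancel_left (hdisj B hB1)
    have e2 : (A ∪ B') \ A = B' := Finset.union_sdiff_cancel_left (hdisj B' hB2)
    rw [← e1, ← e2, hAB]

/-- The up-closure in `[n']` of a family on `[n]`, for `n ≤ n'`. -/
def upClosure (n' : ℕ) (𝒢 : Finset (Finset ℕ)) : Finset (Finset ℕ) :=
  (Icc 1 n').powerset.filter (fun H => ∃ G ∈ 𝒢, G ⊆ H)

lemma mem_upClosure {n' : ℕ} {𝒢 : Finset (Finset ℕ)} {H : Finset ℕ} :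
    H ∈ upClosure n' 𝒢 ↔ H ⊆ Icc 1 n' ∧ ∃ G ∈ 𝒢, G ⊆ H := by
  simp [upClosure]

lemma mu_le_mu_upClosure {p : ℝ} (hp : 0 ≤ p) (hp1 : p ≤ 1) {n n' : ℕ} (h : n ≤ n')
    {𝒢 : Finset (Finset ℕ)} (hF : FamilyOn n 𝒢) : mu p n 𝒢 ≤ mu p n' (upClosure n' 𝒢) := by
  classical
  set 𝒞 : Finset ℕ → Finset (Finset ℕ) :=
    fun G => (Icc (n + 1) n').powerset.image (fun B => G ∪ B) with h𝒞
  have hcut : ∀ G ∈ 𝒢, ∀ H ∈ 𝒞 G, H ∩ Icc 1 n = G := by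
    intro G hG H hH
    obtain ⟨B, hB, rfl⟩ := Finset.mem_image.1 hH
    have hB' := Finset.mem_powerset.1 hB
    ext x
    simp only [mem_inter, mem_union]
    constructor
    · rintro ⟨h1 | h1, h2⟩
      · exact h1
      · have := Finset.mem_Icc.1 (hB' h1)
        have := Finset.mem_Icc.1 h2
        omega
    · intro hx; exact ⟨Or.inl hx, hF G hG hx⟩
  have hsub : 𝒢.biUnion 𝒞 ⊆ upClosure n' 𝒢 := by
    intro H hH
    obtain ⟨G, hG, hHG⟩ := Finset.mem_biUnion.1 hH
    obtain ⟨B, hB, rfl⟩ := Finset.mem_image.1 hHG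
    have hB' := Finset.mem_powerset.1 hB
    refine mem_upClosure.2 ⟨Finset.union_subset ?_ ?_, G, hG, Finset.subset_union_left⟩
    · exact (hF G hG).trans (Finset.Icc_subset_Icc_right h)
    · exact hB'.trans (Finset.Icc_subset_Icc_left (by omega))
  refine le_trans (le_of_eq ?_) (mu_mono hp hp1 n' hsub)
  have hb : mu p n' (𝒢.biUnion 𝒞) = ∑ G ∈ 𝒢, mu p n' (𝒞 G) := by
    unfold mu
    refine Finset.sum_biUnion ?_
    intro G hG G' hG' hne
    refine Finset.disjoint_left.2 fun H hH hH' => hne ?_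
    rw [← hcut G hG H hH, ← hcut G' hG' H hH']
  rw [hb]
  unfold mu
  refine Finset.sum_congr rfl fun G hG => ?_
  have := mu_cylinder p h (hF G hG) (Icc (n + 1) n').powerset
    (fun B hB => Finset.mem_powerset.1 hB)
  rw [mu_powerset p (n' - n) _ (by rw [Nat.card_Icc]; omega), mul_one] at this
  exact this.symm

lemma upClosure_props {t n n' : ℕ} {𝒢 : Finset (Finset ℕ)}
    (hF : FamilyOn n 𝒢) (hS : Shifted n 𝒢) (hI : Intersecting3 t 𝒢) :
    FamilyOn n' (upClosure n' 𝒢) ∧ Shifted n' (upClosure n' 𝒢) ∧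
      Intersecting3 t (upClosure n' 𝒢) ∧ InclMaximal n' (upClosure n' 𝒢) := by
  refine ⟨fun G hG => (mem_upClosure.1 hG).1, ?_, ?_, ?_⟩
  · intro i j hi hij hj H hH hjH hiH
    obtain ⟨hHn, G, hG, hGH⟩ := mem_upClosure.1 hH
    refine mem_upClosure.2 ⟨?_, ?_⟩
    · refine Finset.insert_subset (Finset.mem_Icc.2 ⟨hi, by omega⟩) ?_
      exact (Finset.erase_subset _ _).trans hHn
    · by_cases hjG : j ∈ G
      · refine ⟨_, hS i j hi hij (Finset.mem_Icc.1 (hF G hG hjG)).2 G hG hjG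
          (fun h => hiH (hGH h)), ?_⟩
        exact Finset.insert_subset_insert i (Finset.erase_subset_erase j hGH)
      · refine ⟨G, hG, fun x hx => Finset.mem_insert_of_mem (Finset.mem_erase.2 ⟨?_, hGH hx⟩)⟩
        rintro rfl; exact hjG hx
  · intro H₁ h₁ H₂ h₂ H₃ h₃
    obtain ⟨-, G₁, hG₁, s₁⟩ := mem_upClosure.1 h₁
    obtain ⟨-, G₂, hG₂, s₂⟩ := mem_upClosure.1 h₂
    obtain ⟨-, G₃, hG₃, s₃⟩ := mem_upClosure.1 h₃
    exact (hI G₁ hG₁ G₂ hG₂ G₃ hG₃).trans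
      (Finset.card_le_card (Finset.inter_subset_inter (Finset.inter_subset_inter s₁ s₂) s₃))
  · intro H hH H' hHH' hH'
    obtain ⟨-, G, hG, s⟩ := mem_upClosure.1 hH
    exact mem_upClosure.2 ⟨hH', G, hG, s.trans hHH'⟩

lemma mu_biUnion_le {ι : Type*} [DecidableEq ι] {p : ℝ} (hp : 0 ≤ p) (hp1 : p ≤ 1) (n : ℕ)
    (I : Finset ι) (𝒞 : ι → Finset (Finset ℕ)) :
    mu p n (I.biUnion 𝒞) ≤ ∑ i ∈ I, mu p n (𝒞 i) := by
  induction I using Finset.induction_on with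
  | empty => simp [mu]
  | insert a I ha ih =>
    rw [Finset.biUnion_insert, Finset.sum_insert ha]
    have h : mu p n (𝒞 a ∪ I.biUnion 𝒞) + mu p n (𝒞 a ∩ I.biUnion 𝒞) =
        mu p n (𝒞 a) + mu p n (I.biUnion 𝒞) := Finset.sum_union_inter
    have h0 : mu p n ∅ ≤ mu p n (𝒞 a ∩ I.biUnion 𝒞) :=
      mu_mono hp hp1 n (Finset.empty_subset _)
    have h1 : mu p n ∅ = 0 := by simp [mu]
    linarith

/-- A bound for the measure of `F_s^t`, computed on its first `t + 3s` coordinates; `k` counts the holes. -/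
lemma mu_Fst_le {p : ℝ} (hp : 0 ≤ p) (hp1 : p ≤ 1) (n t s : ℕ) :
    mu p n (Fst n t s) ≤
      ∑ k ∈ range (s + 1), ((t + 3 * s).choose k : ℝ) * (p ^ (t + 3 * s - k) * (1 - p) ^ k) := by
  classical
  set m := t + 3 * s with hm
  set N := max n m with hN
  have h1 : mu p n (Fst n t s) ≤ mu p N (Fst N t s) := by
    refine (mu_le_mu_upClosure hp hp1 (le_max_left n m)
      (fun G hG => Finset.mem_powerset.1 (Finset.mem_filter.1 hG).1)).trans
      (mu_mono hp hp1 _ ?_)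
    intro H hH
    obtain ⟨hHN, G, hG, hGH⟩ := mem_upClosure.1 hH
    refine Finset.mem_filter.2 ⟨Finset.mem_powerset.2 hHN, ?_⟩
    exact (Finset.mem_filter.1 hG).2.trans
      (Finset.card_le_card (Finset.inter_subset_inter hGH le_rfl))
  refine h1.trans ?_
  -- cylinders over the hole sets `H ⊆ [m]` of size at most `s`
  set 𝒞 : Finset ℕ → Finset (Finset ℕ) :=
    fun H => (Icc (m + 1) N).powerset.image (fun B => (Icc 1 m \ H) ∪ B) with h𝒞
  have hsub : Fst N t s ⊆
      (range (s + 1)).biUnion (fun k => (powersetCard k (Icc 1 m)).biUnion 𝒞) := by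
    intro G hG
    obtain ⟨hGN, hGc⟩ := Finset.mem_filter.1 hG
    rw [Finset.mem_powerset] at hGN
    have hc : (Icc 1 m \ G).card ≤ s := by
      have h2 := Finset.card_sdiff_add_card_inter (Icc 1 m) G
      rw [Nat.card_Icc, Finset.inter_comm] at h2
      rw [← hm] at hGc
      omega
    refine Finset.mem_biUnion.2 ⟨_, Finset.mem_range.2 (Nat.lt_succ_of_le hc), ?_⟩
    refine Finset.mem_biUnion.2 ⟨Icc 1 m \ G, ?_, ?_⟩
    · exact Finset.mem_powersetCard.2 ⟨Finset.sdiff_subset, rfl⟩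
    · refine Finset.mem_image.2 ⟨G ∩ Icc (m + 1) N,
        Finset.mem_powerset.2 Finset.inter_subset_right, ?_⟩
      ext x
      simp only [mem_union, mem_sdiff, mem_inter, mem_Icc]
      constructor
      · tauto
      · intro hx
        have := Finset.mem_Icc.1 (hGN hx)
        by_cases hxm : x ≤ m
        · left; tauto
        · right; exact ⟨hx, by omega, this.2⟩
  refine (mu_mono hp hp1 N hsub).trans ((mu_biUnion_le hp hp1 N _ _).trans ?_)
  refine Finset.sum_le_sum fun k _ => (mu_biUnion_le hp hp1 N _ _).trans (le_of_eq ?_)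
  have hconst : ∀ H ∈ powersetCard k (Icc 1 m),
      mu p N (𝒞 H) = p ^ (m - k) * (1 - p) ^ k := by
    intro H hH
    obtain ⟨hH1, hH2⟩ := Finset.mem_powersetCard.1 hH
    have hk : k ≤ m := by
      rw [← hH2]; simpa using Finset.card_le_card hH1
    rw [mu_cylinder p (le_max_right n m) Finset.sdiff_subset _
      (fun B hB => Finset.mem_powerset.1 hB), mu_powerset p (N - m) _ (by rw [Nat.card_Icc]; omega),
      mul_one, Finset.card_sdiff_of_subset hH1, hH2, Nat.card_Icc, Nat.add_sub_cancel,
      Nat.sub_sub_self hk]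
  rw [Finset.sum_congr rfl hconst, Finset.sum_const, Finset.card_powersetCard, Nat.card_Icc,
    Nat.add_sub_cancel, nsmul_eq_mul]

/-! ### Families not contained in `F_s^t` -/

/-- A shifted up-closed family not contained in `F_s^t` contains `[n] ∖ [t+2s, t+3s]`. -/
lemma cofinal_mem {n t s : ℕ} {𝒢 : Finset (Finset ℕ)}
    (hF : FamilyOn n 𝒢) (hS : Shifted n 𝒢) (hU : InclMaximal n 𝒢) (hnot : ¬ 𝒢 ⊆ Fst n t s) :
    Icc 1 n \ Icc (t + 2 * s) (t + 3 * s) ∈ 𝒢 := by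
  obtain ⟨G, hG, hGF⟩ := Finset.not_subset.1 hnot
  have hcard : (G ∩ Icc 1 (t + 3 * s)).card < t + 2 * s := by
    by_contra hc
    exact hGF (Finset.mem_filter.2 ⟨Finset.mem_powerset.2 (hF G hG), by omega⟩)
  refine mem_of_dominates hF hS hU Finset.sdiff_subset _ G hG rfl fun j hj => ?_
  have hle : (G ∩ Icc 1 j).card ≤ j := by
    simpa using Finset.card_le_card (Finset.inter_subset_right (s₁ := G) (s₂ := Icc 1 j))
  by_cases h1 : j < t + 2 * s
  · have : (Icc 1 n \ Icc (t + 2 * s) (t + 3 * s)) ∩ Icc 1 j = Icc 1 j := by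
      ext x; simp only [mem_inter, mem_sdiff, mem_Icc]; omega
    rw [this]; simpa using hle
  by_cases h2 : j ≤ t + 3 * s
  · have : Icc 1 (t + 2 * s - 1) ⊆ (Icc 1 n \ Icc (t + 2 * s) (t + 3 * s)) ∩ Icc 1 j := by
      intro x; simp only [mem_inter, mem_sdiff, mem_Icc]; omega
    have h3 := Finset.card_le_card this
    have h4 : (G ∩ Icc 1 j).card ≤ (G ∩ Icc 1 (t + 3 * s)).card :=
      Finset.card_le_card (Finset.inter_subset_inter le_rfl (Finset.Icc_subset_Icc_right h2))
    rw [Nat.card_Icc] at h3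
    omega
  · have h3 : Icc 1 (t + 2 * s - 1) ∪ Icc (t + 3 * s + 1) j ⊆
        (Icc 1 n \ Icc (t + 2 * s) (t + 3 * s)) ∩ Icc 1 j := by
      intro x; simp only [mem_union, mem_inter, mem_sdiff, mem_Icc]; omega
    have h3 := Finset.card_le_card h3
    rw [Finset.card_union_of_disjoint, Nat.card_Icc, Nat.card_Icc] at h3
    · have h4 : G ∩ Icc 1 j ⊆ (G ∩ Icc 1 (t + 3 * s)) ∪ Icc (t + 3 * s + 1) j := by
        intro x; simp only [mem_union, mem_inter, mem_Icc]; intro hx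
        by_cases hx' : x ≤ t + 3 * s
        · left; exact ⟨hx.1, hx.2.1, hx'⟩
        · right; omega
      have h4 := (Finset.card_le_card h4).trans (Finset.card_union_le _ _)
      rw [Nat.card_Icc] at h4
      omega
    · rw [Finset.disjoint_left]; intro x; simp only [mem_Icc]; omega

/-- The cylinder of the sets in `[n]` whose holes in `[m]` are exactly `H`, for `H ⊆ [m]`. -/
def cyl (n m : ℕ) (H : Finset ℕ) : Finset (Finset ℕ) :=
  (Icc (m + 1) n).powerset.image (fun B => (Icc 1 m \ H) ∪ B)

lemma cyl_holes {n m : ℕ} {H G : Finset ℕ} (hH : H ⊆ Icc 1 m) (hG : G ∈ cyl n m H) :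
    Icc 1 m \ G = H := by
  obtain ⟨B, hB, rfl⟩ := Finset.mem_image.1 hG
  have hB' := Finset.mem_powerset.1 hB
  ext x
  simp only [mem_sdiff, mem_union]
  constructor
  · tauto
  · intro hx
    refine ⟨hH hx, ?_⟩
    rintro (h | h)
    · exact h.2 hx
    · have h1 := Finset.mem_Icc.1 (hB' h)
      have h2 := Finset.mem_Icc.1 (hH hx)
      omega

/-- If `𝒢` is not contained in `F_s^t`, then each cylinder given by an `s`-set of holes in
`[t+s-1]` meets `𝒢` in an intersecting link, hence in at most the fraction `p`. -/
lemma cyl_sdiff_ge {p : ℝ} (hp : 0 < p) (hp2 : p ≤ 1 / 2) {n t s : ℕ} (ht : 1 ≤ t)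
    (hn : t + 3 * s ≤ n) {𝒢 : Finset (Finset ℕ)} (hF : FamilyOn n 𝒢) (hS : Shifted n 𝒢)
    (hU : InclMaximal n 𝒢) (hI : Intersecting3 t 𝒢) (hnot : ¬ 𝒢 ⊆ Fst n t s)
    {H : Finset ℕ} (hH : H ∈ powersetCard s (Icc 1 (t + s - 1))) :
    (1 - p) * (p ^ (t + 2 * s) * (1 - p) ^ s) ≤ mu p n (cyl n (t + 3 * s) H \ 𝒢) := by
  classical
  obtain ⟨hH1, hHc⟩ := Finset.mem_powersetCard.1 hH
  set m := t + 3 * s with hm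
  have hHm : H ⊆ Icc 1 m := hH1.trans (Finset.Icc_subset_Icc_right (by omega))
  set V := Icc (m + 1) n with hV
  have hVc : V.card = n - m := by rw [hV, Nat.card_Icc]; omega
  set A := Icc 1 m \ H with hA
  have hAc : A.card = t + 2 * s := by
    rw [hA, Finset.card_sdiff_of_subset hHm, hHc, Nat.card_Icc]; omega
  set 𝓛 := V.powerset.filter (fun B => A ∪ B ∈ 𝒢) with h𝓛
  set 𝓜 := V.powerset.filter (fun B => ¬ A ∪ B ∈ 𝒢) with h𝓜
  have hcyl : cyl n m H \ 𝒢 = 𝓜.image (fun B => A ∪ B) := by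
    ext G
    simp only [cyl, mem_sdiff, mem_image, h𝓜, mem_filter]
    constructor
    · rintro ⟨⟨B, hB, rfl⟩, h⟩; exact ⟨B, ⟨hB, h⟩, rfl⟩
    · rintro ⟨B, ⟨hB, h⟩, rfl⟩; exact ⟨⟨B, hB, rfl⟩, h⟩
  have hsum : mu p (n - m) 𝓛 + mu p (n - m) 𝓜 = 1 := by
    rw [← mu_powerset p (n - m) V hVc]
    exact Finset.sum_filter_add_sum_filter_not _ _ _
  have hinter : mu p (n - m) 𝓛 ≤ p := by
    refine mu_intersecting_le hp hp2 (n - m) V hVc 𝓛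
      (fun B hB => Finset.mem_powerset.1 (Finset.mem_filter.1 hB).1) ?_ ?_
    · intro B hB B' hBB' hB'
      refine Finset.mem_filter.2 ⟨Finset.mem_powerset.2 hB', ?_⟩
      refine hU _ (Finset.mem_filter.1 hB).2 _ (Finset.union_subset_union le_rfl hBB') ?_
      refine Finset.union_subset ?_ ?_
      · exact Finset.sdiff_subset.trans (Finset.Icc_subset_Icc_right hn)
      · exact hB'.trans (Finset.Icc_subset_Icc_left (by omega))
    · intro B hB B' hB'
      obtain ⟨hB1, hB2⟩ := Finset.mem_filter.1 hB
      obtain ⟨hB1', hB2'⟩ := Finset.mem_filter.1 hB'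
      rw [Finset.mem_powerset] at hB1' hB1
      -- push the holes of the second set to `[t+s, t+2s-1]`
      set A' := Icc 1 m \ Icc (t + s) (t + 2 * s - 1) with hA'
      have hshift : A' ∪ B' ∈ 𝒢 := by
        refine mem_of_dominates hF hS hU ?_ _ _ hB2' rfl fun j hj => ?_
        · refine Finset.union_subset ?_ ?_
          · exact Finset.sdiff_subset.trans (Finset.Icc_subset_Icc_right hn)
          · exact hB1'.trans (Finset.Icc_subset_Icc_left (by omega))
        have hdis : ∀ X ⊆ Icc 1 m, ((X ∪ B') ∩ Icc 1 j).card =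
            (X ∩ Icc 1 j).card + (B' ∩ Icc 1 j).card := by
          intro X hX
          rw [Finset.union_inter_distrib_right, Finset.card_union_of_disjoint]
          rw [Finset.disjoint_left]
          intro x hx hx'
          have h1 := Finset.mem_Icc.1 (hX (Finset.mem_inter.1 hx).1)
          have h2 := Finset.mem_Icc.1 (hB1' (Finset.mem_inter.1 hx').1)
          omega
        rw [hdis A Finset.sdiff_subset, hdis A' Finset.sdiff_subset]
        refine Nat.add_le_add_right ?_ _
        by_cases hj1 : j < t + s
        · refine Finset.card_le_card fun x hx => ?_
          simp only [hA, hA', mem_inter, mem_sdiff, mem_Icc] at hx ⊢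
          omega
        · -- all holes `H` lie below `j`
          have e1 : A ∩ Icc 1 j = Icc 1 (min m j) \ H := by
            ext x; simp only [hA, mem_inter, mem_sdiff, mem_Icc]
            constructor
            · rintro ⟨⟨h1, h2⟩, h3⟩; exact ⟨by omega, h2⟩
            · rintro ⟨h1, h2⟩; exact ⟨⟨by omega, h2⟩, by omega⟩
          have e2 : A' ∩ Icc 1 j = Icc 1 (min m j) \ Icc (t + s) (t + 2 * s - 1) := by
            ext x; simp only [hA', mem_inter, mem_sdiff, mem_Icc]; omega
          rw [e1, e2, Finset.card_sdiff_of_subset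
            (hH1.trans (Finset.Icc_subset_Icc_right (by omega))), hHc]
          have := Finset.le_card_sdiff (Icc (t + s) (t + 2 * s - 1)) (Icc 1 (min m j))
          rw [Nat.card_Icc (t + s)] at this
          omega
      have hE := cofinal_mem hF hS hU hnot
      have h3 := hI _ hB2 _ hshift _ hE
      by_contra hemp
      rw [Finset.not_nonempty_iff_eq_empty] at hemp
      have hsub : (A ∪ B) ∩ (A' ∪ B') ∩ (Icc 1 n \ Icc (t + 2 * s) (t + 3 * s)) ⊆
          Icc 1 (t + s - 1) \ H := by
        intro x hx
        simp only [mem_inter, mem_union, mem_sdiff, mem_Icc, hA, hA'] at hx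
        have hBx : x ∈ B → m + 1 ≤ x := fun h => (Finset.mem_Icc.1 (hB1 h)).1
        have hBx' : x ∈ B' → m + 1 ≤ x := fun h => (Finset.mem_Icc.1 (hB1' h)).1
        have hno : ¬ (x ∈ B ∧ x ∈ B') := fun h => by
          have : x ∈ B ∩ B' := Finset.mem_inter.2 h
          rw [hemp] at this
          exact absurd this (Finset.notMem_empty x)
        rw [Finset.mem_sdiff, Finset.mem_Icc]
        obtain ⟨⟨h1 | h1, h2 | h2⟩, h3, h4⟩ := hx
        · exact ⟨by omega, h1.2⟩
        · have := hBx' h2; omega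
        · have := hBx h1; omega
        · exact absurd ⟨h1, h2⟩ hno
      have h4 := Finset.card_le_card hsub
      rw [Finset.card_sdiff_of_subset hH1, hHc, Nat.card_Icc] at h4
      omega
  rw [hcyl, mu_cylinder p hn Finset.sdiff_subset 𝓜
    (fun B hB => Finset.mem_powerset.1 (Finset.mem_filter.1 hB).1), hAc,
    show m - (t + 2 * s) = s by omega, mul_comm (1 - p)]
  have hq : 0 ≤ 1 - p := by linarith
  exact mul_le_mul_of_nonneg_left (by linarith) (by positivity)

/-- For families contained in none of `F_0^t, …, F_3^t`, the supermartingale bound improves by the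
parts of the cylinders lying outside `𝒢`: these cylinders are disjoint and all their members reach
the line `y = 2x + t`. -/
lemma mu_add_le {p a : ℝ} (hp : 0 < p) (hp2 : p ≤ 1 / 2) (ha : 0 < a)
    (hsup : p + (1 - p) * a ^ 3 ≤ a) {n t : ℕ} (ht : 1 ≤ t) (hn : t + 9 ≤ n)
    {𝒢 : Finset (Finset ℕ)} (hF : FamilyOn n 𝒢) (hS : Shifted n 𝒢)
    (hU : InclMaximal n 𝒢) (hI : Intersecting3 t 𝒢) (hnot : ∀ s < 4, ¬ 𝒢 ⊆ Fst n t s) :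
    mu p n 𝒢 + ∑ s ∈ range 4, ((t + s - 1).choose s : ℝ) *
      ((1 - p) * (p ^ (t + 2 * s) * (1 - p) ^ s)) ≤ a ^ t := by
  classical
  have hq : 0 ≤ 1 - p := by linarith
  refine le_trans ?_ (mu_hit_le hp.le (by linarith) ha hsup t n)
  set I : Finset (Σ _ : ℕ, Finset ℕ) :=
    (range 4).sigma (fun s => powersetCard s (Icc 1 (t + s - 1))) with hIdef
  set 𝒟 := I.biUnion (fun i => cyl n (t + 3 * i.1) i.2 \ 𝒢) with h𝒟
  have hImem : ∀ i ∈ I, i.1 < 4 ∧ i.2 ⊆ Icc 1 (t + i.1 - 1) ∧ i.2.card = i.1 := by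
    intro i hi
    rw [hIdef, Finset.mem_sigma, Finset.mem_range, Finset.mem_powersetCard] at hi
    exact hi
  have hIm : ∀ i ∈ I, i.2 ⊆ Icc 1 (t + 3 * i.1) := fun i hi =>
    (hImem i hi).2.1.trans (Finset.Icc_subset_Icc_right (by omega))
  have hpd : (I : Set (Σ _ : ℕ, Finset ℕ)).PairwiseDisjoint
      (fun i => cyl n (t + 3 * i.1) i.2 \ 𝒢) := by
    -- a common member would have `i.1` holes in `[t + 3 i.1]` for both indices
    have hlt : ∀ i ∈ I, ∀ j ∈ I, ∀ G, G ∈ cyl n (t + 3 * i.1) i.2 →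
        G ∈ cyl n (t + 3 * j.1) j.2 → ¬ i.1 < j.1 := by
      intro i hi j hj G hGi hGj hij
      have h1 := cyl_holes (hIm i hi) hGi
      have h2 := cyl_holes (hIm j hj) hGj
      have hsub : j.2 ⊆ i.2 ∪ Icc (t + 3 * i.1 + 1) (t + j.1 - 1) := by
        intro x hx
        have hx1 := Finset.mem_Icc.1 ((hImem j hj).2.1 hx)
        rw [Finset.mem_union, Finset.mem_Icc]
        by_cases hc : x ≤ t + 3 * i.1
        · left
          rw [← h1, Finset.mem_sdiff, Finset.mem_Icc]
          rw [← h2] at hx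
          exact ⟨⟨hx1.1, hc⟩, (Finset.mem_sdiff.1 hx).2⟩
        · right; omega
      have := (Finset.card_le_card hsub).trans (Finset.card_union_le _ _)
      rw [(hImem j hj).2.2, (hImem i hi).2.2, Nat.card_Icc] at this
      omega
    intro i hi j hj hne
    refine Finset.disjoint_left.2 fun G hG hG' => hne ?_
    have hGi := (Finset.mem_sdiff.1 hG).1
    have hGj := (Finset.mem_sdiff.1 hG').1
    have e : i.1 = j.1 := by
      have h1 := hlt i hi j hj G hGi hGj
      have h2 := hlt j hj i hi G hGj hGi
      omega
    have h1 := cyl_holes (hIm i hi) hGi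
    have h2 := cyl_holes (hIm j hj) hGj
    obtain ⟨i1, i2⟩ := i
    obtain ⟨j1, j2⟩ := j
    simp only at e h1 h2
    subst e
    rw [← h1, ← h2]
  have hsum : ∑ s ∈ range 4, ((t + s - 1).choose s : ℝ) *
      ((1 - p) * (p ^ (t + 2 * s) * (1 - p) ^ s)) ≤ mu p n 𝒟 := by
    have e : mu p n 𝒟 = ∑ i ∈ I, mu p n (cyl n (t + 3 * i.1) i.2 \ 𝒢) := by
      unfold mu; exact Finset.sum_biUnion hpd
    rw [e, hIdef, Finset.sum_sigma]
    refine Finset.sum_le_sum fun s hs => ?_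
    have hs' := Finset.mem_range.1 hs
    have hle := Finset.card_nsmul_le_sum (powersetCard s (Icc 1 (t + s - 1)))
      (fun H => mu p n (cyl n (t + 3 * s) H \ 𝒢))
      ((1 - p) * (p ^ (t + 2 * s) * (1 - p) ^ s)) (fun H hH =>
        cyl_sdiff_ge hp hp2 ht (by omega) hF hS hU hI (hnot s hs') hH)
    rw [Finset.card_powersetCard, Nat.card_Icc, Nat.add_sub_cancel, nsmul_eq_mul] at hle
    exact hle
  have hdisj : Disjoint 𝒢 𝒟 := by
    rw [Finset.disjoint_left]
    intro G hG hGD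
    obtain ⟨i, _, hi⟩ := Finset.mem_biUnion.1 hGD
    exact (Finset.mem_sdiff.1 hi).2 hG
  have hun : mu p n (𝒢 ∪ 𝒟) = mu p n 𝒢 + mu p n 𝒟 := Finset.sum_union hdisj
  refine (add_le_add_right hsum _).trans (hun.symm.le.trans
    (mu_mono hp.le (by linarith) n ?_))
  intro G hG
  rw [Finset.mem_filter, Finset.mem_powerset]
  rcases Finset.mem_union.1 hG with h | h
  · exact ⟨hF G h, hits ht hF hS hU hI G h⟩
  · obtain ⟨i, hi, hGi⟩ := Finset.mem_biUnion.1 h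
    have hGi := (Finset.mem_sdiff.1 hGi).1
    have hholes := cyl_holes (hIm i hi) hGi
    have hi4 := (hImem i hi).1
    refine ⟨?_, t + 3 * i.1, by omega, ?_⟩
    · obtain ⟨B, hB, rfl⟩ := Finset.mem_image.1 hGi
      refine Finset.union_subset ?_ ?_
      · exact Finset.sdiff_subset.trans (Finset.Icc_subset_Icc_right (by omega))
      · exact (Finset.mem_powerset.1 hB).trans (Finset.Icc_subset_Icc_left (by omega))
    · have h2 := Finset.card_sdiff_add_card_inter (Icc 1 (t + 3 * i.1)) G
      rw [hholes, (hImem i hi).2.2, Nat.card_Icc, Finset.inter_comm] at h2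
      omega

/-! ### Numerical estimates -/

lemma p_lt {t : ℕ} (ht : 15 ≤ t) {p : ℝ} (hp : 0 < p) (h : ((t : ℝ) + 2) * p ^ 2 ≤ 1 + p) :
    p ≤ 0.2738 := by
  by_contra hc
  push Not at hc
  have h15 : (15 : ℝ) ≤ t := by exact_mod_cast ht
  nlinarith [mul_le_mul_of_nonneg_right h15 (sq_nonneg p)]

lemma le_of_le_p0 (t : ℕ) {p : ℝ} (hp : 0 < p) :
    (p ≤ p0 t → ((t : ℝ) + 2) * p ^ 2 ≤ 1 + p) ∧
    (p < p0 t → ((t : ℝ) + 2) * p ^ 2 < 1 + p) := by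
  have ht : (0 : ℝ) ≤ t := Nat.cast_nonneg t
  set r := Real.sqrt (4 * t + 9) with hr
  have hr2 : r ^ 2 = 4 * t + 9 := Real.sq_sqrt (by positivity)
  have hr3 : 3 ≤ r := Real.le_sqrt_of_sq_le (by linarith)
  have e : (t : ℝ) + 2 = (r - 1) * (r + 1) / 4 := by linarith
  have hd : 0 < r - 1 := by linarith
  -- with `c = p (r - 1) ≤ 2` the claim reads `c² + 2pc ≤ 4 + 4p`
  have e2 : ((t : ℝ) + 2) * p ^ 2 = ((p * (r - 1)) ^ 2 + 2 * p * (p * (r - 1))) / 4 := by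
    rw [e]; ring
  have hc0 : 0 < p * (r - 1) := by positivity
  constructor
  · intro h
    have hc : p * (r - 1) ≤ 2 := by
      rw [p0, le_div_iff₀ hd] at h; exact h
    rw [e2]; nlinarith
  · intro h
    have hc : p * (r - 1) < 2 := by
      rw [p0, lt_div_iff₀ hd] at h; exact h
    rw [e2]; nlinarith

/-- `1.18` is a rate for which `a = p exp (1.18 x)`, `x = p² (1 - p)`, satisfies the
supermartingale condition of the walk. -/
lemma exp_super {x : ℝ} (hx : 0 ≤ x) (hx1 : x ≤ 0.0545) :
    1 + x * Real.exp (1.18 * x) ^ 3 ≤ Real.exp (1.18 * x) := by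
  rw [← Real.exp_nat_mul]
  have h1 : 1 + 1.18 * x + (1.18 * x) ^ 2 / 2 ≤ Real.exp (1.18 * x) :=
    Real.quadratic_le_exp_of_nonneg (by positivity)
  have h2 := Real.exp_bound' (x := ((3 : ℕ) : ℝ) * (1.18 * x)) (by positivity)
    (by push_cast; linarith) (n := 3) (by norm_num)
  simp only [Finset.sum_range_succ, Finset.sum_range_zero, Nat.factorial] at h2
  norm_num at h2
  norm_num
  have h3 : Real.exp (3 * (59 / 50 * x)) ≤ 1.18 + 0.69 * x := by
    refine h2.trans ?_
    nlinarith [mul_nonneg hx hx, mul_nonneg hx (sub_nonneg.2 hx1),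
      mul_nonneg (mul_nonneg hx hx) (sub_nonneg.2 hx1)]
  have h4 := mul_le_mul_of_nonneg_left h3 hx
  norm_num at h1
  nlinarith [mul_nonneg hx hx]

/-- An upper bound for `exp (1.18 w)` on `[0, 1]`: the square of a quartic Taylor bound for
`exp (0.59 w)`. -/
noncomputable def expUp (w : ℝ) : ℝ :=
  (1 + 0.59 * w + (0.59 * w) ^ 2 / 2 + (0.59 * w) ^ 3 / 6 + 5 * (0.59 * w) ^ 4 / 96) ^ 2

/-- `∑ s < 4, C(t+s-1, s) x ^ s` in terms of `w = t x`. -/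
noncomputable def capSum (w x : ℝ) : ℝ :=
  1 + w + w * (w + x) / 2 + w * (w + x) * (w + 2 * x) / 6

lemma exp_le_expUp {w : ℝ} (hw : 0 ≤ w) (hw1 : w ≤ 1) : Real.exp (1.18 * w) ≤ expUp w := by
  have h := Real.exp_bound' (x := 0.59 * w) (by positivity) (by linarith) (n := 4) (by norm_num)
  simp only [Finset.sum_range_succ, Finset.sum_range_zero, Nat.factorial] at h
  have e : Real.exp (1.18 * w) = Real.exp (0.59 * w) ^ 2 := by
    rw [← Real.exp_nat_mul]; congr 1; push_cast; ring
  rw [e, expUp]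
  refine pow_le_pow_left₀ (Real.exp_pos _).le (h.trans (le_of_eq ?_)) 2
  push_cast
  ring

/-- The numerical inequality for all `p` in a segment `[a, b]`, reduced to one evaluation: the left
side increases with `w` and decreases with `x`, so `w` and `x` may be replaced by their extreme
values, both attained at `p = a`. -/
lemma seg {a b p w : ℝ} (ha : 0 ≤ a) (hap : a ≤ p) (hpb : p ≤ b) (hb : b ≤ 0.28) (hw : 0 ≤ w)
    (hwp : w ≤ 1 - 3 * p ^ 2 + 2 * p ^ 3)
    (hnum : expUp (1 - 3 * a ^ 2 + 2 * a ^ 3) -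
      (1 - b) * capSum (1 - 3 * a ^ 2 + 2 * a ^ 3) (a ^ 2 * (1 - a)) < 1) :
    expUp w - (1 - p) * capSum w (p ^ 2 * (1 - p)) < 1 := by
  have hp0 : 0 ≤ p := ha.trans hap
  set W := 1 - 3 * a ^ 2 + 2 * a ^ 3 with hW
  set X := a ^ 2 * (1 - a) with hX
  have hwW : w ≤ W := by
    refine hwp.trans ?_
    rw [hW]
    nlinarith [mul_nonneg (sub_nonneg.2 hap) ha, mul_nonneg (sub_nonneg.2 hap) hp0,
      mul_nonneg (mul_nonneg (sub_nonneg.2 hap) ha) (by linarith : 0 ≤ 1 - p),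
      mul_nonneg (mul_nonneg (sub_nonneg.2 hap) hp0) (by linarith : 0 ≤ 1 - p),
      mul_nonneg (mul_nonneg (sub_nonneg.2 hap) ha) (by linarith : 0 ≤ 1 - a)]
  have hX0 : 0 ≤ X := mul_nonneg (sq_nonneg a) (by linarith)
  have hX1 : X ≤ 0.08 := by
    have : a ^ 2 ≤ 0.28 ^ 2 := pow_le_pow_left₀ ha (by linarith) 2
    nlinarith [sq_nonneg a]
  have hXx : X ≤ p ^ 2 * (1 - p) := by
    rw [hX]
    nlinarith [mul_nonneg (sub_nonneg.2 hap) ha, mul_nonneg (sub_nonneg.2 hap) hp0,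
      mul_nonneg (mul_nonneg (sub_nonneg.2 hap) ha) (by linarith : 0 ≤ 1/2 - p),
      mul_nonneg (mul_nonneg (sub_nonneg.2 hap) hp0) (by linarith : 0 ≤ 1/2 - p),
      mul_nonneg (mul_nonneg (sub_nonneg.2 hap) ha) (by linarith : 0 ≤ 1/2 - a)]
  have hcap : capSum w X ≤ capSum w (p ^ 2 * (1 - p)) := by
    unfold capSum
    gcongr
    exact mul_nonneg hw (by linarith)
  have hcap0 : 0 ≤ capSum w X := by unfold capSum; positivity
  have h1 : (1 - b) * capSum w X ≤ (1 - p) * capSum w (p ^ 2 * (1 - p)) := by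
    refine mul_le_mul (by linarith) hcap hcap0 (by linarith)
  have p1 : 0 ≤ W - w := by linarith
  have p2 : 0 ≤ W ^ 2 - w ^ 2 := sub_nonneg.2 (pow_le_pow_left₀ hw hwW 2)
  have p3 : 0 ≤ W ^ 3 - w ^ 3 := sub_nonneg.2 (pow_le_pow_left₀ hw hwW 3)
  have p4 : 0 ≤ W ^ 4 - w ^ 4 := sub_nonneg.2 (pow_le_pow_left₀ hw hwW 4)
  have p5 : 0 ≤ W ^ 5 - w ^ 5 := sub_nonneg.2 (pow_le_pow_left₀ hw hwW 5)
  have p6 : 0 ≤ W ^ 6 - w ^ 6 := sub_nonneg.2 (pow_le_pow_left₀ hw hwW 6)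
  have p7 : 0 ≤ W ^ 7 - w ^ 7 := sub_nonneg.2 (pow_le_pow_left₀ hw hwW 7)
  have p8 : 0 ≤ W ^ 8 - w ^ 8 := sub_nonneg.2 (pow_le_pow_left₀ hw hwW 8)
  have hb0 : 0 ≤ b := by linarith
  clear_value W X
  have c1 : 0 ≤ 0.18 - X / 2 - X ^ 2 / 3 := by nlinarith
  have c2 : 0 ≤ 0.18 - X / 2 := by linarith
  have m1 := mul_nonneg p1 c1
  have m2 := mul_nonneg p2 c2
  -- coefficientwise, `expUp w` dominates `capSum w X`
  have h2 : capSum W X - capSum w X ≤ expUp W - expUp w := by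
    unfold capSum expUp
    linarith
  have h3 : 0 ≤ capSum W X - capSum w X := by
    have hW0 : 0 ≤ W := hw.trans hwW
    have : capSum w X ≤ capSum W X := by unfold capSum; gcongr
    linarith
  have h4 := mul_nonneg hb0 h3
  linarith

/-- The numerical inequality behind the gap; `w = t x` is confined by `(t + 2) p² ≤ 1 + p`. -/
lemma main_num {t : ℕ} (ht : 15 ≤ t) {p : ℝ} (hp : 0 < p) (h : ((t : ℝ) + 2) * p ^ 2 ≤ 1 + p) :
    Real.exp (1.18 * (t * (p ^ 2 * (1 - p)))) -
      (1 - p) * capSum (t * (p ^ 2 * (1 - p))) (p ^ 2 * (1 - p)) < 1 := by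
  have hp1 := p_lt ht hp h
  have hq : 0 ≤ 1 - p := by linarith
  set w := (t : ℝ) * (p ^ 2 * (1 - p)) with hw
  have hw0 : 0 ≤ w := by positivity
  have hw1 : w ≤ 1 - 3 * p ^ 2 + 2 * p ^ 3 := by
    have := mul_le_mul_of_nonneg_right h hq
    rw [hw]; nlinarith
  have hw2 : w ≤ 1 := by nlinarith [sq_nonneg p]
  have he := exp_le_expUp hw0 hw2
  suffices expUp w - (1 - p) * capSum w (p ^ 2 * (1 - p)) < 1 by linarith
  rcases le_total p 0.15 with h1 | h1
  · exact seg le_rfl hp.le h1 (by norm_num) hw0 hw1 (by norm_num [expUp, capSum])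
  rcases le_total p 0.195 with h2 | h2
  · exact seg (by norm_num) h1 h2 (by norm_num) hw0 hw1 (by norm_num [expUp, capSum])
  rcases le_total p 0.225 with h3 | h3
  · exact seg (by norm_num) h2 h3 (by norm_num) hw0 hw1 (by norm_num [expUp, capSum])
  rcases le_total p 0.248 with h4 | h4
  · exact seg (by norm_num) h3 h4 (by norm_num) hw0 hw1 (by norm_num [expUp, capSum])
  rcases le_total p 0.265 with h5 | h5
  · exact seg (by norm_num) h4 h5 (by norm_num) hw0 hw1 (by norm_num [expUp, capSum])
  · exact seg (by norm_num) h5 hp1 (by norm_num) hw0 hw1 (by norm_num [expUp, capSum])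

/-! ### The gap below `p ^ t` -/

lemma cast_choose_two (m : ℕ) : ((m.choose 2 : ℕ) : ℝ) = m * (m - 1) / 2 :=
  Nat.cast_choose_two ℝ m

lemma cast_choose_three (m : ℕ) : ((m.choose 3 : ℕ) : ℝ) = m * (m - 1) * (m - 2) / 6 := by
  rw [Nat.cast_choose_eq_ascPochhammer_div]
  rcases m with _ | _ | m
  · simp [ascPochhammer_succ_right, Nat.factorial]
  · simp [ascPochhammer_succ_right, Nat.factorial]
  · have : m + 1 + 1 - (3 - 1) = m := by omega
    rw [this]
    simp [ascPochhammer_succ_right, Nat.factorial]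
    ring

/-- With `x = p² (1 - p)` and `w = t x`, the losses over the cylinders sum to
`p ^ t (1 - p) capSum w x`. -/
lemma sum_losses {t : ℕ} (ht : 1 ≤ t) (p : ℝ) :
    ∑ s ∈ range 4, ((t + s - 1).choose s : ℝ) * ((1 - p) * (p ^ (t + 2 * s) * (1 - p) ^ s)) =
      p ^ t * ((1 - p) * capSum (t * (p ^ 2 * (1 - p))) (p ^ 2 * (1 - p))) := by
  obtain ⟨k, rfl⟩ : ∃ k, t = k + 1 := ⟨t - 1, by omega⟩
  simp only [Finset.sum_range_succ, Finset.sum_range_zero, capSum]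
  have e1 : k + 1 + 1 - 1 = k + 1 := by omega
  have e2 : k + 1 + 2 - 1 = k + 2 := by omega
  have e3 : k + 1 + 3 - 1 = k + 3 := by omega
  rw [e1, e2, e3, cast_choose_two, cast_choose_three, Nat.choose_zero_right, Nat.choose_one_right]
  push_cast
  ring

lemma mu_F0_le {p : ℝ} (hp : 0 ≤ p) (hp1 : p ≤ 1) (n t : ℕ) : mu p n (Fst n t 0) ≤ p ^ t := by
  simpa using mu_Fst_le hp hp1 n t 0

lemma mu_F1_le {p : ℝ} (hp : 0 ≤ p) (hp1 : p ≤ 1) (n t : ℕ) :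
    mu p n (Fst n t 1) ≤ p ^ t * (p ^ 3 + (t + 3) * (p ^ 2 * (1 - p))) := by
  refine (mu_Fst_le hp hp1 n t 1).trans (le_of_eq ?_)
  have e1 : t + 3 * 1 - 1 = t + 2 := by omega
  simp only [Finset.sum_range_succ, Finset.sum_range_zero, e1, Nat.choose_zero_right,
    Nat.choose_one_right]
  push_cast
  ring

lemma mu_F2_le {p : ℝ} (hp : 0 ≤ p) (hp1 : p ≤ 1) (n t : ℕ) {x w : ℝ}
    (hx : x = p ^ 2 * (1 - p)) (hw : w = t * x) :
    mu p n (Fst n t 2) ≤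
      p ^ t * ((w + 6 * x) * (w + 5 * x) / 2 + p ^ 3 * (w + 6 * x) + p ^ 6) := by
  refine (mu_Fst_le hp hp1 n t 2).trans (le_of_eq ?_)
  have e1 : t + 3 * 2 - 1 = t + 5 := by omega
  have e2 : t + 3 * 2 - 2 = t + 4 := by omega
  simp only [Finset.sum_range_succ, Finset.sum_range_zero, e1, e2, Nat.choose_zero_right,
    Nat.choose_one_right, cast_choose_two, Nat.sub_zero, hw, hx]
  push_cast
  ring

lemma mu_F3_le {p : ℝ} (hp : 0 ≤ p) (hp1 : p ≤ 1) (n t : ℕ) {x w : ℝ}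
    (hx : x = p ^ 2 * (1 - p)) (hw : w = t * x) :
    mu p n (Fst n t 3) ≤
      p ^ t * ((w + 9 * x) * (w + 8 * x) * (w + 7 * x) / 6 +
        p ^ 3 * ((w + 9 * x) * (w + 8 * x) / 2) + p ^ 6 * (w + 9 * x) + p ^ 9) := by
  refine (mu_Fst_le hp hp1 n t 3).trans (le_of_eq ?_)
  have e1 : t + 3 * 3 - 1 = t + 8 := by omega
  have e2 : t + 3 * 3 - 2 = t + 7 := by omega
  have e3 : t + 3 * 3 - 3 = t + 6 := by omega
  simp only [Finset.sum_range_succ, Finset.sum_range_zero, e1, e2, e3, Nat.choose_zero_right,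
    Nat.choose_one_right, cast_choose_two, cast_choose_three, Nat.sub_zero, hw, hx]
  push_cast
  ring

/-- A shifted up-closed 3-wise `t`-intersecting family either has measure below `p ^ t` by a
constant, or is contained in `F_0^t`, or, at the threshold, in `F_1^t`. -/
lemma exists_gap {t : ℕ} (ht : 15 ≤ t) {p : ℝ} (hp : 0 < p) (hpp : p ≤ p0 t) :
    ∃ δ : ℝ, 0 < δ ∧ ∀ n, t + 9 ≤ n → ∀ 𝒢 : Finset (Finset ℕ), FamilyOn n 𝒢 → Shifted n 𝒢 →
      InclMaximal n 𝒢 → Intersecting3 t 𝒢 →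
      mu p n 𝒢 ≤ p ^ t - δ ∨ 𝒢 ⊆ Fst n t 0 ∨ (p = p0 t ∧ 𝒢 ⊆ Fst n t 1) := by
  have h := (le_of_le_p0 t hp).1 hpp
  have hp27 := p_lt ht hp h
  have hp1 : p ≤ 1 := by linarith
  have hq : 0 ≤ 1 - p := by linarith
  obtain ⟨x, hx⟩ : ∃ x, x = p ^ 2 * (1 - p) := ⟨_, rfl⟩
  obtain ⟨w, hw⟩ : ∃ w, w = t * x := ⟨_, rfl⟩
  have hx0 : 0 ≤ x := by rw [hx]; positivity
  have hx1 : x ≤ 0.0545 := by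
    rw [hx]
    -- `p² (1 - p)` increases on `[0, 2/3]`
    nlinarith [mul_nonneg (sub_nonneg.2 hp27) hp.le,
      mul_nonneg (mul_nonneg (sub_nonneg.2 hp27) hp.le) (sub_nonneg.2 hp27)]
  have hw0 : 0 ≤ w := by rw [hw]; positivity
  have hw1 : w ≤ 1 := by
    have := mul_le_mul_of_nonneg_right h hq
    rw [hw, hx]; nlinarith [sq_nonneg p]
  have hp3 : p ^ 3 ≤ 0.021 := (pow_le_pow_left₀ hp.le hp27 3).trans (by norm_num)
  have hp6 : p ^ 6 ≤ 0.0005 := (pow_le_pow_left₀ hp.le hp27 6).trans (by norm_num)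
  have hp9 : p ^ 9 ≤ 0.0001 := (pow_le_pow_left₀ hp.le hp27 9).trans (by norm_num)
  have hpt : 0 < p ^ t := pow_pos hp t
  -- the gap in the case where none of `F_0^t, …, F_3^t` contains the family
  set g := 1 - (Real.exp (1.18 * w) - (1 - p) * capSum w x) with hg
  have hg0 : 0 < g := by
    have := main_num ht hp h
    rw [← hx, ← hw] at this
    linarith
  -- the gap for families inside `F_1^t`, below the threshold
  set f := if p = p0 t then 1 else 1 - (p ^ 3 + (t + 3) * (p ^ 2 * (1 - p))) with hf
  have hf0 : 0 < f := by
    rw [hf]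
    split_ifs with hc
    · norm_num
    · have h' := (le_of_le_p0 t hp).2 (lt_of_le_of_ne hpp hc)
      have := mul_lt_mul_of_pos_right h' (by linarith : 0 < 1 - p)
      linarith
  refine ⟨p ^ t * min (min g f) 0.1, by positivity, fun n hn 𝒢 hF hS hU hI => ?_⟩
  have hm1 : min (min g f) 0.1 ≤ g := (min_le_left _ _).trans (min_le_left _ _)
  have hm2 : min (min g f) 0.1 ≤ f := (min_le_left _ _).trans (min_le_right _ _)
  have hm3 : min (min g f) 0.1 ≤ 0.1 := min_le_right _ _
  have reduce : ∀ c, mu p n 𝒢 ≤ p ^ t * c → c ≤ 1 - min (min g f) 0.1 →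
      mu p n 𝒢 ≤ p ^ t - p ^ t * min (min g f) 0.1 := by
    intro c h1 h2
    have := mul_le_mul_of_nonneg_left h2 hpt.le
    linarith
  by_cases h0 : 𝒢 ⊆ Fst n t 0
  · exact Or.inr (Or.inl h0)
  by_cases h1 : 𝒢 ⊆ Fst n t 1
  · by_cases hc : p = p0 t
    · exact Or.inr (Or.inr ⟨hc, h1⟩)
    · left
      refine reduce _ ((mu_mono hp.le hp1 n h1).trans (mu_F1_le hp.le hp1 n t)) ?_
      rw [hf, if_neg hc] at hm2
      rw [hf, if_neg hc]
      linarith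
  left
  by_cases h2 : 𝒢 ⊆ Fst n t 2
  · refine reduce _ ((mu_mono hp.le hp1 n h2).trans (mu_F2_le hp.le hp1 n t hx hw)) ?_
    have b1 : (w + 6 * x) * (w + 5 * x) ≤ 1.327 * 1.2725 :=
      mul_le_mul (by linarith) (by linarith) (by positivity) (by norm_num)
    have b2 : p ^ 3 * (w + 6 * x) ≤ 0.021 * 1.327 :=
      mul_le_mul hp3 (by linarith) (by positivity) (by norm_num)
    linarith
  by_cases h3 : 𝒢 ⊆ Fst n t 3
  · refine reduce _ ((mu_mono hp.le hp1 n h3).trans (mu_F3_le hp.le hp1 n t hx hw)) ?_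
    have b1 : (w + 9 * x) * (w + 8 * x) ≤ 1.4905 * 1.436 :=
      mul_le_mul (by linarith) (by linarith) (by positivity) (by norm_num)
    have b2 : (w + 9 * x) * (w + 8 * x) * (w + 7 * x) ≤ 1.4905 * 1.436 * 1.3815 :=
      mul_le_mul b1 (by linarith) (by positivity) (by norm_num)
    have b3 : p ^ 3 * ((w + 9 * x) * (w + 8 * x) / 2) ≤ 0.021 * (1.4905 * 1.436 / 2) :=
      mul_le_mul hp3 (by linarith) (by positivity) (by norm_num)
    have b4 : p ^ 6 * (w + 9 * x) ≤ 0.0005 * 1.4905 :=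
      mul_le_mul hp6 (by linarith) (by positivity) (by norm_num)
    linarith
  · have hE : 0 < Real.exp (1.18 * x) := Real.exp_pos _
    have hsup : p + (1 - p) * (p * Real.exp (1.18 * x)) ^ 3 ≤ p * Real.exp (1.18 * x) := by
      have := mul_le_mul_of_nonneg_left (exp_super hx0 hx1) hp.le
      refine le_trans (le_of_eq ?_) this
      have : p * (1 + x * Real.exp (1.18 * x) ^ 3) = p + (1 - p) * p ^ 3 *
          Real.exp (1.18 * x) ^ 3 := by
        nth_rewrite 1 [hx]; ring
      rw [this]; ring
    have hnot : ∀ s < 4, ¬ 𝒢 ⊆ Fst n t s := by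
      intro s hs
      interval_cases s <;> assumption
    have hmain := mu_add_le hp (by linarith) (by positivity) hsup (by omega) hn hF hS hU hI hnot
    rw [sum_losses (by omega), mul_pow, ← Real.exp_nat_mul, ← hx, ← hw,
      show (t : ℝ) * (1.18 * x) = 1.18 * w by rw [hw]; ring] at hmain
    refine reduce (Real.exp (1.18 * w) - (1 - p) * capSum w x) (by linarith) ?_
    linarith

lemma mu_symmDiff_lt {p : ℝ} (n : ℕ) {t : ℕ} {ε : ℝ} (hε : 0 < ε) {ℱ 𝒢 : Finset (Finset ℕ)}
    (hsub : 𝒢 ⊆ ℱ) (hℱ : mu p n ℱ ≤ p ^ t) (h𝒢 : mu p n 𝒢 = p ^ t - ε) :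
    mu p n ((ℱ ∪ 𝒢) \ (ℱ ∩ 𝒢)) < 2 * ε := by
  rw [Finset.union_eq_left.2 hsub, Finset.inter_eq_right.2 hsub]
  have : mu p n (ℱ \ 𝒢) + mu p n 𝒢 = mu p n ℱ := Finset.sum_sdiff hsub
  linarith

lemma subset_Fst_of_upClosure {n n' t s : ℕ} (hn : n ≤ n') {𝒢 : Finset (Finset ℕ)}
    (hF : FamilyOn n 𝒢) (h : upClosure n' 𝒢 ⊆ Fst n' t s) : 𝒢 ⊆ Fst n t s := by
  intro G hG
  have hmem := h (mem_upClosure.2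
    ⟨(hF G hG).trans (Finset.Icc_subset_Icc_right hn), G, hG, subset_rfl⟩)
  exact Finset.mem_filter.2 ⟨Finset.mem_powerset.2 (hF G hG), (Finset.mem_filter.1 hmem).2⟩

/-- Theorem 3 (stability, sharper form): for `t ≥ 15` and `0 < p ≤ p₀(t)` there
are `ε₀', C > 0` such that every shifted 3-wise `t`-intersecting family
`𝒢 ⊆ 2^[n]` with `μ_p(𝒢) = p^t − ε`, `0 < ε < ε₀'`, satisfies
`μ_p(F_0^t △ 𝒢) < Cε`, or `p = p₀(t)` and `μ_p(F_1^t △ 𝒢) < Cε`. -/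
theorem thm3 (t : ℕ) (ht : 15 ≤ t) (p : ℝ) (hp : 0 < p) (hpp : p ≤ p0 t) :
    ∃ ε₀' C : ℝ, 0 < ε₀' ∧ 0 < C ∧
      ∀ ε : ℝ, 0 < ε → ε < ε₀' → ∀ n : ℕ, ∀ 𝒢 : Finset (Finset ℕ),
        FamilyOn n 𝒢 → Shifted n 𝒢 → Intersecting3 t 𝒢 →
        mu p n 𝒢 = p ^ t - ε →
        (mu p n ((Fst n t 0 ∪ 𝒢) \ (Fst n t 0 ∩ 𝒢)) < C * ε ∨
          (p = p0 t ∧ mu p n ((Fst n t 1 ∪ 𝒢) \ (Fst n t 1 ∩ 𝒢)) < C * ε)) := by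
  obtain ⟨δ, hδ, hgap⟩ := exists_gap ht hp hpp
  have h := (le_of_le_p0 t hp).1 hpp
  have hp27 := p_lt ht hp h
  have hp1 : p ≤ 1 := by linarith
  refine ⟨δ, 2, hδ, by norm_num, fun ε hε hεδ n 𝒢 hF hS hI hmu => ?_⟩
  -- enlarging the ground set makes room for the cylinders without lowering the measure
  set n' := max n (t + 9)
  obtain ⟨hF', hS', hI', hU'⟩ := upClosure_props (n' := n') hF hS hI
  have hle := mu_le_mu_upClosure hp.le hp1 (le_max_left n (t + 9)) hF
  rcases hgap n' (le_max_right _ _) _ hF' hS' hU' hI' with hg | hg | ⟨hc, hg⟩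
  · linarith
  · left
    exact mu_symmDiff_lt n hε (subset_Fst_of_upClosure (le_max_left _ _) hF hg)
      (mu_F0_le hp.le hp1 n t) hmu
  · right
    refine ⟨hc, mu_symmDiff_lt n hε (subset_Fst_of_upClosure (le_max_left _ _) hF hg) ?_ hmu⟩
    refine (mu_F1_le hp.le hp1 n t).trans (mul_le_of_le_one_right (pow_pos hp t).le ?_)
    have := mul_le_mul_of_nonneg_right h (by linarith : 0 ≤ 1 - p)
    linarith
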